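/- There exist constants ϑ₀ ∈ (0, 1) and C > 0 such that for every ϑ ∈ [0, ϑ₀], the Kullback–Leibler divergence between the law of |1 + ϑ·U|·Z and the standard Gaussian law satisfies D( law(|1 + ϑU|·Z) ‖ N(0,1) ) ≤ C·ϑ⁴. -/

import Mathlib

open MeasureTheory ProbabilityTheory

/-- The Kullback–Leibler divergence `D(P ‖ Q) = ∫ log(dP/dQ) dP` (natural logarithm). -/
noncomputable def klDivergence {α : Type*} [MeasurableSpace α]
    (P Q : Measure α) : ℝ :=
  ∫ x, Real.log ((P.rnDeriv Q x).toReal) ∂P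

/-!
The law of `|1 + X| Z` is the Gaussian scale mixture `E N(0, V)` with `V = (1 + X) ^ 2`, and its
Kullback–Leibler divergence from `N(0, 1)` is at most the `χ²`-divergence, whose value plus one is
the second moment of the density. Expanding the square of the mixture density over two independent
copies `V`, `V'` of the variance and integrating the Gaussian first gives
`1 + χ² = E (1 - (V - 1) (V' - 1)) ^ (-1 / 2) ≤ 1 + (E (V - 1)) ^ 2 / 2 + (E (V - 1) ^ 2) ^ 2`.
Since `V - 1 = 2 X + X ^ 2` with `X` centred and bounded, both `E (V - 1)` and `E (V - 1) ^ 2` are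
of order `E X ^ 2`, which is of order `ϑ ^ 2` for `X = ϑ U`.
-/

open InformationTheory
open scoped ENNReal NNReal

section KullbackLeibler

variable {α β : Type*} {mα : MeasurableSpace α} {mβ : MeasurableSpace β}

lemma klFun_le_sub_one_sq {x : ℝ} (hx : 0 ≤ x) : klFun x ≤ (x - 1) ^ 2 := by
  have hlog : x * Real.log x ≤ x * (x - 1) := by
    rcases hx.eq_or_lt with rfl | hpos
    · simp
    · exact mul_le_mul_of_nonneg_left (Real.log_le_sub_one_of_pos hpos) hx
  rw [klFun_apply]
  linarith

lemma ofReal_klFun_toReal_add_two_mul_le {a : ℝ≥0∞} (ha : a ≠ ∞) :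
    ENNReal.ofReal (klFun a.toReal) + 2 * a ≤ a ^ 2 + 1 := by
  lift a to ℝ≥0 using ha
  rw [ENNReal.coe_toReal, ENNReal.ofReal, ← ENNReal.coe_ofNat]
  norm_cast
  rw [← NNReal.coe_le_coe]
  push_cast
  rw [Real.coe_toNNReal _ (klFun_nonneg a.coe_nonneg)]
  linarith [klFun_le_sub_one_sq a.coe_nonneg]

-- The subtraction-free form of `klDiv μ ν ≤ ∫ (dμ/dν - 1) ^ 2 ∂ν`.
lemma klDiv_add_two_mul_univ_le {μ ν : Measure α} [IsFiniteMeasure μ] [IsFiniteMeasure ν]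
    (hμν : μ ≪ ν) :
    klDiv μ ν + 2 * μ Set.univ ≤ ∫⁻ x, μ.rnDeriv ν x ^ 2 ∂ν + ν Set.univ := by
  have hrn := μ.measurable_rnDeriv ν
  calc klDiv μ ν + 2 * μ Set.univ
      = ∫⁻ x, (ENNReal.ofReal (klFun (μ.rnDeriv ν x).toReal) + 2 * μ.rnDeriv ν x) ∂ν := by
        rw [lintegral_add_right _ (hrn.const_mul 2), lintegral_const_mul 2 hrn,
          Measure.lintegral_rnDeriv hμν, klDiv_eq_lintegral_klFun_of_ac hμν]
    _ ≤ ∫⁻ x, (μ.rnDeriv ν x ^ 2 + 1) ∂ν := by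
        refine lintegral_mono_ae ?_
        filter_upwards [μ.rnDeriv_ne_top ν] with x hx
        exact ofReal_klFun_toReal_add_two_mul_le hx
    _ = ∫⁻ x, μ.rnDeriv ν x ^ 2 ∂ν + ν Set.univ := by
        rw [lintegral_add_right _ measurable_const, lintegral_one]

lemma klDivergence_le_of_klDiv_le {μ ν : Measure α} [IsProbabilityMeasure μ]
    [IsProbabilityMeasure ν] {c : ℝ} (hc : 0 ≤ c) (h : klDiv μ ν ≤ ENNReal.ofReal c) :
    klDivergence μ ν ≤ c := by
  have hμν : μ ≪ ν := (klDiv_ne_top_iff.1 (ne_top_of_le_ne_top ENNReal.ofReal_ne_top h)).1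
  calc klDivergence μ ν = (klDiv μ ν).toReal :=
        (toReal_klDiv_of_measure_eq hμν (by simp only [measure_univ])).symm
    _ ≤ c := ENNReal.toReal_le_of_le_ofReal hc h

variable {ρ : Measure α} [SFinite ρ] {κ : α → Measure β} {ν : Measure β} {f : α → β → ℝ≥0∞}

lemma bind_eq_withDensity_lintegral [SFinite ν] (hκ : AEMeasurable κ ρ)
    (hf : Measurable (Function.uncurry f)) (hκf : ∀ᵐ a ∂ρ, κ a = ν.withDensity (f a)) :
    ρ.bind κ = ν.withDensity fun x => ∫⁻ a, f a x ∂ρ := by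
  ext A hA
  rw [Measure.bind_apply hA hκ, withDensity_apply _ hA,
    lintegral_lintegral_swap (f := fun x a => f a x) (hf.comp measurable_swap).aemeasurable]
  refine lintegral_congr_ae ?_
  filter_upwards [hκf] with a ha
  rw [ha, withDensity_apply _ hA]

lemma lintegral_lintegral_sq [SFinite ν] (hf : Measurable (Function.uncurry f)) :
    ∫⁻ x, (∫⁻ a, f a x ∂ρ) ^ 2 ∂ν = ∫⁻ a, ∫⁻ b, ∫⁻ x, f a x * f b x ∂ν ∂ρ ∂ρ := by
  have hfx (x : β) : Measurable fun a => f a x := hf.comp measurable_prodMk_right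
  calc ∫⁻ x, (∫⁻ a, f a x ∂ρ) ^ 2 ∂ν
      = ∫⁻ x, ∫⁻ a, ∫⁻ b, f a x * f b x ∂ρ ∂ρ ∂ν := by
        simp_rw [lintegral_const_mul _ (hfx _), lintegral_mul_const _ (hfx _), sq]
    _ = ∫⁻ a, ∫⁻ x, ∫⁻ b, f a x * f b x ∂ρ ∂ν ∂ρ :=
        lintegral_lintegral_swap (by fun_prop)
    _ = ∫⁻ a, ∫⁻ b, ∫⁻ x, f a x * f b x ∂ν ∂ρ ∂ρ :=
        lintegral_congr fun a => lintegral_lintegral_swap (by fun_prop)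

lemma klDiv_bind_add_one_le [IsProbabilityMeasure ν] [IsProbabilityMeasure (ρ.bind κ)]
    (hκ : AEMeasurable κ ρ) (hf : Measurable (Function.uncurry f))
    (hκf : ∀ᵐ a ∂ρ, κ a = ν.withDensity (f a)) :
    klDiv (ρ.bind κ) ν + 1 ≤ ∫⁻ a, ∫⁻ b, ∫⁻ x, f a x * f b x ∂ν ∂ρ ∂ρ := by
  have hbind := bind_eq_withDensity_lintegral hκ hf hκf
  have hrn : (ρ.bind κ).rnDeriv ν =ᵐ[ν] fun x => ∫⁻ a, f a x ∂ρ := by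
    rw [hbind]
    exact Measure.rnDeriv_withDensity ν hf.lintegral_prod_left'
  have hkl := klDiv_add_two_mul_univ_le (hbind ▸ withDensity_absolutelyContinuous ν _)
  have hrn_sq : ∫⁻ x, (ρ.bind κ).rnDeriv ν x ^ 2 ∂ν = ∫⁻ x, (∫⁻ a, f a x ∂ρ) ^ 2 ∂ν :=
    lintegral_congr_ae (hrn.pow_const 2)
  rw [hrn_sq, lintegral_lintegral_sq hf, measure_univ, measure_univ,
    mul_one, ← one_add_one_eq_two, ← add_assoc] at hkl
  exact (ENNReal.add_le_add_iff_right ENNReal.one_ne_top).1 hkl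

end KullbackLeibler

section InverseSquareRoot

lemma inv_sqrt_one_sub_le {y : ℝ} (hy : y ≤ 1 / 2) : (√(1 - y))⁻¹ ≤ 1 + y / 2 + y ^ 2 := by
  have hpos : 0 < 1 + y / 2 + y ^ 2 := by nlinarith [sq_nonneg (y + 1 / 4)]
  have hsub : 0 < 1 - y := by linarith
  rw [inv_le_comm₀ (Real.sqrt_pos.2 hsub) hpos]
  refine Real.le_sqrt_of_sq_le ?_
  rw [inv_pow, inv_le_comm₀ (by positivity) hsub, inv_le_iff_one_le_mul₀ hsub]
  have hfactor : 0 ≤ 5 / 4 - 5 / 4 * y - y ^ 3 := by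
    rcases le_total y 0 with h | h
    · nlinarith [pow_nonneg (neg_nonneg.2 h) 3]
    · nlinarith [pow_le_pow_left₀ h hy 3]
  have hdiff : (1 + y / 2 + y ^ 2) ^ 2 * (1 - y) - 1 = y ^ 2 * (5 / 4 - 5 / 4 * y - y ^ 3) := by
    ring
  have hprod := mul_nonneg (sq_nonneg y) hfactor
  rw [← hdiff] at hprod
  linarith

variable {α : Type*} {mα : MeasurableSpace α} {ρ : Measure α} [IsProbabilityMeasure ρ]

lemma lintegral_lintegral_one_add_mul_div_two_add_sq {W : α → ℝ} (hW : MemLp W 2 ρ) :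
    ∫⁻ a, ∫⁻ b, ENNReal.ofReal (1 + W a * W b / 2 + (W a * W b) ^ 2) ∂ρ ∂ρ =
      ENNReal.ofReal (1 + (∫ a, W a ∂ρ) ^ 2 / 2 + (∫ a, W a ^ 2 ∂ρ) ^ 2) := by
  have hW_int := hW.integrable one_le_two
  have hmul : Integrable (fun p : α × α => W p.1 * W p.2 / 2) (ρ.prod ρ) :=
    (hW_int.mul_prod hW_int).div_const 2
  have hsq : Integrable (fun p : α × α => (W p.1 * W p.2) ^ 2) (ρ.prod ρ) := by
    simpa only [mul_pow] using hW.integrable_sq.mul_prod hW.integrable_sq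
  have hlin : Integrable (fun p : α × α => 1 + W p.1 * W p.2 / 2) (ρ.prod ρ) :=
    (integrable_const 1).add hmul
  have hquad : Integrable (fun p : α × α => 1 + W p.1 * W p.2 / 2 + (W p.1 * W p.2) ^ 2)
      (ρ.prod ρ) := hlin.add hsq
  have hnonneg (y : ℝ) : 0 ≤ 1 + y / 2 + y ^ 2 := by nlinarith [sq_nonneg (y + 1 / 4)]
  calc ∫⁻ a, ∫⁻ b, ENNReal.ofReal (1 + W a * W b / 2 + (W a * W b) ^ 2) ∂ρ ∂ρ
      = ENNReal.ofReal (∫ p : α × α, (1 + W p.1 * W p.2 / 2 + (W p.1 * W p.2) ^ 2) ∂ρ.prod ρ) := by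
        rw [ofReal_integral_eq_lintegral_ofReal hquad
          (Filter.Eventually.of_forall fun p => hnonneg _),
          lintegral_prod _ hquad.aemeasurable.ennreal_ofReal]
    _ = ENNReal.ofReal (1 + (∫ a, W a ∂ρ) ^ 2 / 2 + (∫ a, W a ^ 2 ∂ρ) ^ 2) := by
        rw [integral_add hlin hsq, integral_add (integrable_const 1) hmul, integral_div,
          integral_prod_mul, integral_const, probReal_univ, one_smul, ← sq]
        simp_rw [mul_pow]
        rw [integral_prod_mul (fun a => W a ^ 2) (fun a => W a ^ 2), ← sq]

lemma lintegral_inv_sqrt_one_sub_mul_le {W : α → ℝ} (hW : AEStronglyMeasurable W ρ)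
    (hbound : ∀ᵐ a ∂ρ, W a ^ 2 ≤ 1 / 2) :
    ∫⁻ a, ∫⁻ b, ENNReal.ofReal (√(1 - W a * W b))⁻¹ ∂ρ ∂ρ ≤
      ENNReal.ofReal (1 + (∫ a, W a ∂ρ) ^ 2 / 2 + (∫ a, W a ^ 2 ∂ρ) ^ 2) := by
  have hW2 : MemLp W 2 ρ := by
    refine MemLp.of_bound hW 1 ?_
    filter_upwards [hbound] with a ha
    exact (sq_le_one_iff_abs_le_one _).1 (by linarith)
  rw [← lintegral_lintegral_one_add_mul_div_two_add_sq hW2]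
  refine lintegral_mono_ae ?_
  filter_upwards [hbound] with a ha
  refine lintegral_mono_ae ?_
  filter_upwards [hbound] with b hb
  exact ENNReal.ofReal_le_ofReal
    (inv_sqrt_one_sub_le (by linarith [two_mul_le_add_sq (W a) (W b)]))

end InverseSquareRoot

section GaussianMixture

/-- The density of the centred Gaussian of variance `v` with respect to the standard Gaussian. It is
written as a quotient of Lebesgue densities, and is this density only for `v ≠ 0`. -/
noncomputable def gaussianVarianceRatio (v : ℝ≥0) (x : ℝ) : ℝ≥0∞ :=
  gaussianPDF 0 v x / gaussianPDF 0 1 x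

lemma measurable_uncurry_gaussianVarianceRatio :
    Measurable (Function.uncurry gaussianVarianceRatio) := by
  unfold gaussianVarianceRatio Function.uncurry
  fun_prop

lemma gaussianReal_eq_withDensity_gaussianVarianceRatio {v : ℝ≥0} (hv : v ≠ 0) :
    gaussianReal 0 v = (gaussianReal 0 1).withDensity (gaussianVarianceRatio v) := by
  rw [gaussianReal_of_var_ne_zero 0 hv, gaussianReal_of_var_ne_zero 0 one_ne_zero,
    ← withDensity_mul _ (measurable_gaussianPDF 0 1)
      measurable_uncurry_gaussianVarianceRatio.of_uncurry_left]
  congr 1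
  ext x
  exact (ENNReal.mul_div_cancel (gaussianPDF_pos 0 one_ne_zero x).ne' gaussianPDF_ne_top).symm

lemma gaussianPDFReal_mul_div_gaussianPDFReal_one (v w : ℝ≥0) (x : ℝ) :
    gaussianPDFReal 0 v x * gaussianPDFReal 0 w x / gaussianPDFReal 0 1 x =
      (√(2 * Real.pi * (v * w)))⁻¹ *
        Real.exp (-(((v : ℝ)⁻¹ + (w : ℝ)⁻¹ - 1) / 2) * x ^ 2) := by
  have hexp : Real.exp (-(((v : ℝ)⁻¹ + (w : ℝ)⁻¹ - 1) / 2) * x ^ 2) =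
      Real.exp (-x ^ 2 / (2 * v)) * Real.exp (-x ^ 2 / (2 * w)) / Real.exp (-x ^ 2 / 2) := by
    rw [← Real.exp_add, ← Real.exp_sub]
    congr 1
    rw [mul_comm 2 (v : ℝ), mul_comm 2 (w : ℝ), ← div_div, ← div_div]
    ring
  have hpi : √(2 * Real.pi) ≠ 0 := by positivity
  simp only [gaussianPDFReal, NNReal.coe_one, mul_one, sub_zero]
  rw [hexp, Real.sqrt_mul (by positivity) (v : ℝ), Real.sqrt_mul (by positivity) (w : ℝ),
    Real.sqrt_mul (by positivity) ((v : ℝ) * w), Real.sqrt_mul v.coe_nonneg]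
  field_simp

lemma gaussianPDF_one_mul_gaussianVarianceRatio_mul (v w : ℝ≥0) (x : ℝ) :
    gaussianPDF 0 1 x * (gaussianVarianceRatio v x * gaussianVarianceRatio w x) =
      ENNReal.ofReal (gaussianPDFReal 0 v x * gaussianPDFReal 0 w x / gaussianPDFReal 0 1 x) := by
  have hone := gaussianPDFReal_pos 0 1 x one_ne_zero
  simp only [gaussianVarianceRatio, gaussianPDF]
  rw [← ENNReal.ofReal_div_of_pos hone, ← ENNReal.ofReal_div_of_pos hone,
    ← ENNReal.ofReal_mul (div_nonneg (gaussianPDFReal_nonneg 0 v x) hone.le),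
    ← ENNReal.ofReal_mul hone.le]
  congr 1
  field_simp

lemma lintegral_gaussianVarianceRatio_mul {v w : ℝ≥0} (hv : v ≠ 0) (hw : w ≠ 0)
    (hvw : ((v : ℝ) - 1) * (w - 1) < 1) :
    ∫⁻ x, gaussianVarianceRatio v x * gaussianVarianceRatio w x ∂gaussianReal 0 1 =
      ENNReal.ofReal (√(1 - ((v : ℝ) - 1) * (w - 1)))⁻¹ := by
  set b : ℝ := ((v : ℝ)⁻¹ + (w : ℝ)⁻¹ - 1) / 2 with hb_def
  have hb : b = (1 - ((v : ℝ) - 1) * (w - 1)) / (2 * (v * w)) := by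
    rw [hb_def]
    field_simp
    ring
  have hb_pos : 0 < b := hb ▸ div_pos (sub_pos.2 hvw) (by positivity)
  have hmeas : Measurable fun x => gaussianVarianceRatio v x * gaussianVarianceRatio w x :=
    measurable_uncurry_gaussianVarianceRatio.of_uncurry_left.mul
      measurable_uncurry_gaussianVarianceRatio.of_uncurry_left
  rw [gaussianReal_of_var_ne_zero 0 one_ne_zero,
    lintegral_withDensity_eq_lintegral_mul _ (measurable_gaussianPDF 0 1) hmeas]
  simp only [Pi.mul_apply, gaussianPDF_one_mul_gaussianVarianceRatio_mul,
    gaussianPDFReal_mul_div_gaussianPDFReal_one, ← hb_def]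
  rw [← ofReal_integral_eq_lintegral_ofReal ((integrable_exp_neg_mul_sq hb_pos).const_mul _)
    (Filter.Eventually.of_forall fun x => by positivity), integral_const_mul, integral_gaussian,
    ← Real.sqrt_inv, ← Real.sqrt_inv, ← Real.sqrt_mul (by positivity), hb]
  congr 2
  field_simp

variable {Ω : Type*} {mΩ : MeasurableSpace Ω} {P : Measure Ω} [IsProbabilityMeasure P]

lemma klDiv_bind_gaussianReal_le {V : Ω → ℝ≥0} (hV : Measurable V)
    (hbound : ∀ᵐ ω ∂P, ((V ω : ℝ) - 1) ^ 2 ≤ 1 / 2) :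
    klDiv (P.bind fun ω => gaussianReal 0 (V ω)) (gaussianReal 0 1) ≤
      ENNReal.ofReal ((∫ ω, ((V ω : ℝ) - 1) ∂P) ^ 2 / 2 +
        (∫ ω, ((V ω : ℝ) - 1) ^ 2 ∂P) ^ 2) := by
  have hκ : Measurable fun ω => gaussianReal 0 (V ω) :=
    measurable_gaussianReal.comp (measurable_const.prodMk hV)
  have : IsProbabilityMeasure (P.bind fun ω => gaussianReal 0 (V ω)) :=
    isProbabilityMeasure_bind hκ.aemeasurable (Filter.Eventually.of_forall fun _ => inferInstance)
  have hV0 : ∀ᵐ ω ∂P, V ω ≠ 0 := by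
    filter_upwards [hbound] with ω hω h0
    norm_num [h0] at hω
  have hratio : Measurable (Function.uncurry fun ω => gaussianVarianceRatio (V ω)) :=
    measurable_uncurry_gaussianVarianceRatio.comp (hV.prodMap measurable_id)
  refine (ENNReal.add_le_add_iff_right ENNReal.one_ne_top).1 ?_
  calc klDiv (P.bind fun ω => gaussianReal 0 (V ω)) (gaussianReal 0 1) + 1
      ≤ ∫⁻ ω, ∫⁻ ω', ∫⁻ x, gaussianVarianceRatio (V ω) x * gaussianVarianceRatio (V ω') x
          ∂gaussianReal 0 1 ∂P ∂P :=
        klDiv_bind_add_one_le hκ.aemeasurable hratio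
          (hV0.mono fun ω hω => gaussianReal_eq_withDensity_gaussianVarianceRatio hω)
    _ = ∫⁻ ω, ∫⁻ ω', ENNReal.ofReal (√(1 - ((V ω : ℝ) - 1) * (V ω' - 1)))⁻¹ ∂P ∂P := by
        refine lintegral_congr_ae ?_
        filter_upwards [hbound, hV0] with ω hω hω0
        refine lintegral_congr_ae ?_
        filter_upwards [hbound, hV0] with ω' hω' hω0'
        exact lintegral_gaussianVarianceRatio_mul hω0 hω0'
          (by linarith [two_mul_le_add_sq ((V ω : ℝ) - 1) (V ω' - 1)])
    _ ≤ ENNReal.ofReal (1 + (∫ ω, ((V ω : ℝ) - 1) ∂P) ^ 2 / 2 +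
          (∫ ω, ((V ω : ℝ) - 1) ^ 2 ∂P) ^ 2) :=
        lintegral_inv_sqrt_one_sub_mul_le
          (hV.coe_nnreal_real.sub_const 1).aestronglyMeasurable hbound
    _ = _ := by
        rw [← ENNReal.ofReal_one, ← ENNReal.ofReal_add (by positivity) zero_le_one]
        congr 1
        ring

end GaussianMixture

section RandomScale

variable {Ω : Type*} {mΩ : MeasurableSpace Ω} {P : Measure Ω} [IsProbabilityMeasure P]

lemma map_mul_gaussian_eq_bind {S Z : Ω → ℝ} (hS : Measurable S)
    (hZ : HasLaw Z (gaussianReal 0 1) P) (hSZ : IndepFun S Z P) :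
    P.map (fun ω => S ω * Z ω) = P.bind fun ω => gaussianReal 0 (‖S ω‖₊ ^ 2) := by
  have hκ : Measurable fun ω => gaussianReal 0 (‖S ω‖₊ ^ 2) :=
    measurable_gaussianReal.comp (measurable_const.prodMk (by fun_prop))
  have hscale (s : ℝ) :
      (gaussianReal 0 1).map (fun z => s * z) = gaussianReal 0 (‖s‖₊ ^ 2) := by
    rw [gaussianReal_map_const_mul, mul_zero, mul_one]
    congr 1
    ext
    simp
  have hjoint := (indepFun_iff_map_prod_eq_prod_map_map hS.aemeasurable hZ.aemeasurable).1 hSZ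
  rw [hZ.map_eq] at hjoint
  ext A hA
  have hA' : MeasurableSet ((fun p : ℝ × ℝ => p.1 * p.2) ⁻¹' A) := measurable_mul hA
  calc P.map (fun ω => S ω * Z ω) A
      = (P.map fun ω => (S ω, Z ω)) ((fun p : ℝ × ℝ => p.1 * p.2) ⁻¹' A) := by
        rw [Measure.map_apply_of_aemeasurable (by fun_prop) hA,
          Measure.map_apply_of_aemeasurable (hS.aemeasurable.prodMk hZ.aemeasurable) hA']
        rfl
    _ = ∫⁻ ω, (gaussianReal 0 1).map (fun z => S ω * z) A ∂P := by
        rw [hjoint, Measure.prod_apply hA', lintegral_map (measurable_measure_prodMk_left hA') hS]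
        simp_rw [Measure.map_apply (measurable_const_mul _) hA]
        rfl
    _ = (P.bind fun ω => gaussianReal 0 (‖S ω‖₊ ^ 2)) A := by
        simp_rw [hscale, Measure.bind_apply hA hκ.aemeasurable]

lemma integral_one_add_sq_sub_one {X : Ω → ℝ} (hX : MemLp X 2 P) (hmean : ∫ ω, X ω ∂P = 0) :
    ∫ ω, ((1 + X ω) ^ 2 - 1) ∂P = ∫ ω, X ω ^ 2 ∂P := by
  have hexpand (ω : Ω) : (1 + X ω) ^ 2 - 1 = 2 * X ω + X ω ^ 2 := by ring
  simp_rw [hexpand]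
  rw [integral_add ((hX.integrable one_le_two).const_mul 2) hX.integrable_sq, integral_const_mul,
    hmean, mul_zero, zero_add]

lemma one_add_sq_sub_one_sq_le {x : ℝ} (hx : |x| ≤ 1 / 4) :
    ((1 + x) ^ 2 - 1) ^ 2 ≤ 81 / 16 * x ^ 2 := by
  have hsq : (2 + x) ^ 2 ≤ (9 / 4) ^ 2 := by
    obtain ⟨hlower, hupper⟩ := abs_le.1 hx
    exact pow_le_pow_left₀ (by linarith) (by linarith) 2
  calc ((1 + x) ^ 2 - 1) ^ 2 = (2 + x) ^ 2 * x ^ 2 := by ring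
    _ ≤ (9 / 4) ^ 2 * x ^ 2 := by gcongr
    _ = 81 / 16 * x ^ 2 := by norm_num

lemma klDiv_map_abs_one_add_mul_gaussian_le {X Z : Ω → ℝ} (hX : Measurable X)
    (hZ : HasLaw Z (gaussianReal 0 1) P) (hXZ : IndepFun X Z P)
    (hbound : ∀ᵐ ω ∂P, |X ω| ≤ 1 / 4) (hmean : ∫ ω, X ω ∂P = 0) :
    klDiv (P.map fun ω => |1 + X ω| * Z ω) (gaussianReal 0 1) ≤
      ENNReal.ofReal (27 * (∫ ω, X ω ^ 2 ∂P) ^ 2) := by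
  have hX2 : MemLp X 2 P := MemLp.of_bound hX.aestronglyMeasurable (1 / 4) hbound
  have hvar_sub_one (ω : Ω) :
      ((‖|1 + X ω|‖₊ ^ 2 : ℝ≥0) : ℝ) - 1 = (1 + X ω) ^ 2 - 1 := by
    simp
  have hexcess : ∀ᵐ ω ∂P, ((1 + X ω) ^ 2 - 1) ^ 2 ≤ 81 / 16 * X ω ^ 2 :=
    hbound.mono fun ω hω => one_add_sq_sub_one_sq_le hω
  have hexcess_half : ∀ᵐ ω ∂P, ((1 + X ω) ^ 2 - 1) ^ 2 ≤ 1 / 2 := by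
    filter_upwards [hexcess, hbound] with ω hω hω'
    nlinarith [sq_le_sq' (abs_le.1 hω').1 (abs_le.1 hω').2]
  have hsecond : ∫ ω, ((1 + X ω) ^ 2 - 1) ^ 2 ∂P ≤ 81 / 16 * ∫ ω, X ω ^ 2 ∂P := by
    rw [← integral_const_mul]
    exact integral_mono_of_nonneg (Filter.Eventually.of_forall fun ω => sq_nonneg _)
      (hX2.integrable_sq.const_mul _) hexcess
  have hindep : IndepFun (fun ω => |1 + X ω|) Z P :=
    hXZ.comp (φ := fun x => |1 + x|) (ψ := id) (by fun_prop) measurable_id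
  rw [map_mul_gaussian_eq_bind (by fun_prop) hZ hindep]
  refine (klDiv_bind_gaussianReal_le (by fun_prop) ?_).trans (ENNReal.ofReal_le_ofReal ?_)
  · simpa only [hvar_sub_one] using hexcess_half
  · simp only [hvar_sub_one]
    rw [integral_one_add_sq_sub_one hX2 hmean]
    have hsecond_nonneg : 0 ≤ ∫ ω, ((1 + X ω) ^ 2 - 1) ^ 2 ∂P :=
      integral_nonneg fun ω => sq_nonneg _
    nlinarith [pow_le_pow_left₀ hsecond_nonneg hsecond 2, sq_nonneg (∫ ω, X ω ^ 2 ∂P)]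

lemma klDivergence_map_abs_one_add_mul_gaussian_le {X Z : Ω → ℝ} (hX : Measurable X)
    (hZ : HasLaw Z (gaussianReal 0 1) P) (hXZ : IndepFun X Z P)
    (hbound : ∀ᵐ ω ∂P, |X ω| ≤ 1 / 4) (hmean : ∫ ω, X ω ∂P = 0) :
    klDivergence (P.map fun ω => |1 + X ω| * Z ω) (gaussianReal 0 1) ≤
      27 * (∫ ω, X ω ^ 2 ∂P) ^ 2 := by
  have : IsProbabilityMeasure (P.map fun ω => |1 + X ω| * Z ω) :=
    Measure.isProbabilityMeasure_map (by fun_prop)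
  exact klDivergence_le_of_klDiv_le (by positivity)
    (klDiv_map_abs_one_add_mul_gaussian_le hX hZ hXZ hbound hmean)

end RandomScale

theorem statement9_general
    {Ω : Type*} [MeasurableSpace Ω] (P : Measure Ω) [IsProbabilityMeasure P]
    (Z U : Ω → ℝ) (hUm : Measurable U) (hZ : HasLaw Z (gaussianReal 0 1) P)
    (hindep : IndepFun U Z P) (M : ℝ) (hM : ∀ᵐ ω ∂P, |U ω| ≤ M) (hmean : ∫ ω, U ω ∂P = 0) :
    ∃ ϑ₀ C : ℝ, 0 < ϑ₀ ∧ ϑ₀ < 1 ∧ 0 < C ∧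
      ∀ ϑ : ℝ, |ϑ| ≤ ϑ₀ →
        klDivergence (Measure.map (fun ω => |1 + ϑ * U ω| * Z ω) P) (gaussianReal 0 1) ≤
          C * ϑ ^ 4 := by
  refine ⟨1 / (4 * (|M| + 1)), 27 * (∫ ω, U ω ^ 2 ∂P) ^ 2 + 1, by positivity, ?_, by positivity,
    fun ϑ hϑ => ?_⟩
  · rw [div_lt_one (by positivity)]
    linarith [abs_nonneg M]
  have hbound : ∀ᵐ ω ∂P, |ϑ * U ω| ≤ 1 / 4 := by
    filter_upwards [hM] with ω hω
    calc |ϑ * U ω| = |ϑ| * |U ω| := abs_mul _ _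
      _ ≤ 1 / (4 * (|M| + 1)) * (|M| + 1) := by
        gcongr
        linarith [le_abs_self M]
      _ = 1 / 4 := by field_simp
  have hindep' : IndepFun (fun ω => ϑ * U ω) Z P :=
    hindep.comp (measurable_const_mul ϑ) measurable_id
  have hmean' : ∫ ω, ϑ * U ω ∂P = 0 := by rw [integral_const_mul, hmean, mul_zero]
  calc klDivergence (P.map fun ω => |1 + ϑ * U ω| * Z ω) (gaussianReal 0 1)
      ≤ 27 * (∫ ω, (ϑ * U ω) ^ 2 ∂P) ^ 2 :=
        klDivergence_map_abs_one_add_mul_gaussian_le (hUm.const_mul ϑ) hZ hindep' hbound hmean'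
    _ = 27 * (∫ ω, U ω ^ 2 ∂P) ^ 2 * ϑ ^ 4 := by
        simp_rw [mul_pow]
        rw [integral_const_mul]
        ring
    _ ≤ (27 * (∫ ω, U ω ^ 2 ∂P) ^ 2 + 1) * ϑ ^ 4 := by
        gcongr
        linarith

/-- Let `Z` be standard Gaussian and `U` independent of `Z`, with
bounded support, symmetric law, mean `0` and second moment `1`. Then there exist
`ϑ₀ ∈ (0,1)` and `C > 0` such that for every `ϑ ∈ [0,ϑ₀]`,
`D(law(|1 + ϑU|·Z) ‖ N(0,1)) ≤ C ϑ⁴`. -/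
theorem statement9
    {Ω : Type*} [MeasurableSpace Ω] (P : Measure Ω) [IsProbabilityMeasure P]
    (Z U : Ω → ℝ) (hZm : Measurable Z) (hUm : Measurable U)
    (hZ : Measure.map Z P = gaussianReal 0 1)
    (hindep : IndepFun U Z P)
    (M : ℝ) (hM : ∀ᵐ ω ∂P, |U ω| ≤ M)
    (hsymm : Measure.map (fun ω => -U ω) P = Measure.map U P)
    (hmean : ∫ ω, U ω ∂P = 0)
    (hvar : ∫ ω, (U ω) ^ 2 ∂P = 1) :
    ∃ ϑ₀ C : ℝ, 0 < ϑ₀ ∧ ϑ₀ < 1 ∧ 0 < C ∧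
      ∀ ϑ : ℝ, 0 ≤ ϑ → ϑ ≤ ϑ₀ →
        klDivergence (Measure.map (fun ω => |1 + ϑ * U ω| * Z ω) P) (gaussianReal 0 1) ≤
          C * ϑ ^ 4 := by
  obtain ⟨ϑ₀, C, h₀, h₁, hC, h⟩ :=
    statement9_general P Z U hUm ⟨hZm.aemeasurable, hZ⟩ hindep M hM hmean
  exact ⟨ϑ₀, C, h₀, h₁, hC, fun ϑ hϑ₀ hϑ => h ϑ (by rwa [abs_of_nonneg hϑ₀])⟩
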